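/- For levels a, b ∈ {1,…,K} with all m's strictly positive, and every site i, the normalized weights f_b satisfy, for each fixed realization of the disorder: ∂_{J_i^a} f_b = 0 if b < a; ∂_{J_i^a} f_a = β√(1−t) √(q_a − q_{a−1}) m_a f_a ω̃_a(σ_i); and ∂_{J_i^a} f_b = β√(1−t) √(q_a − q_{a−1}) m_b f_b ( ω̃_b(σ_i) − ω̃_{b−1}(σ_i) ) if b > a. -/

import Mathlib

open MeasureTheory ProbabilityTheory Filter

noncomputable section

/-! ## Gaussian disorder -/

/-- The standard (centered, unit variance) Gaussian measure on `ℝ`. -/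
def stdGauss : Measure ℝ := gaussianReal 0 1

instance : IsProbabilityMeasure stdGauss := by unfold stdGauss; infer_instance

/-- `N` i.i.d. standard Gaussian variables. -/
def gaussN (N : ℕ) : Measure (Fin N → ℝ) := Measure.pi fun _ => stdGauss

instance (N : ℕ) : IsProbabilityMeasure (gaussN N) := by unfold gaussN; infer_instance

/-- The i.i.d. standard Gaussian couplings `J_{ij}` (only entries with `i < j` are used). -/
def gaussC (N : ℕ) : Measure (Fin N → Fin N → ℝ) := Measure.pi fun _ => gaussN N

instance (N : ℕ) : IsProbabilityMeasure (gaussC N) := by unfold gaussC; infer_instance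

/-- The i.i.d. standard Gaussian one-body fields `J_i^a`, `a = 1, …, K`
(row `⟨a-1⟩ : Fin K` corresponds to the level `a` of the paper). -/
def gaussS (K N : ℕ) : Measure (Fin K → Fin N → ℝ) := Measure.pi fun _ => gaussN N

instance (K N : ℕ) : IsProbabilityMeasure (gaussS K N) := by unfold gaussS; infer_instance

/-- I.i.d. standard Gaussian couplings indexed by subsets of sites, for the p-spin model
(only the cardinality-`p` subsets are used). -/
def gaussP (N : ℕ) : Measure (Finset (Fin N) → ℝ) := Measure.pi fun _ => stdGauss

instance (N : ℕ) : IsProbabilityMeasure (gaussP N) := by unfold gaussP; infer_instance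

/-! ## Spins and overlaps -/

/-- The spin value (`±1`) of a Boolean configuration entry. -/
def spin (b : Bool) : ℝ := if b then 1 else -1

/-- The overlap `q₁₂ = N⁻¹ ∑ᵢ σᵢ⁽¹⁾ σᵢ⁽²⁾` of two replicas. -/
def overlap (N : ℕ) (σ τ : Fin N → Bool) : ℝ := (N : ℝ)⁻¹ * ∑ i, spin (σ i) * spin (τ i)

/-! ## Piecewise constant functional order parameters and the Parisi function -/

/-- One backward step of the Parisi recursion on an interval of constancy of the
functional order parameter: from `g = f(q_a, ·)`, with value `m` of the order parameter
and `s = q_a - q`, produce `f(q, ·)`. -/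
def pStep (m s : ℝ) (g : ℝ → ℝ) (y : ℝ) : ℝ :=
  if m = 0 then ∫ z, g (y + z * Real.sqrt s) ∂stdGauss
  else m⁻¹ * Real.log (∫ z, Real.exp (m * g (y + z * Real.sqrt s)) ∂stdGauss)

/-- `parisiLevel K q m β j` is the Parisi function `f(q_{K-j}, ·; x, β)` at the node
`q_{K-j}`, obtained by `j` backward steps from the final condition `f(q_K, y) = log cosh (β y)`. -/
def parisiLevel (K : ℕ) (q m : ℕ → ℝ) (β : ℝ) : ℕ → ℝ → ℝ
  | 0 => fun y => Real.log (Real.cosh (β * y))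
  | j + 1 => pStep (m (K - j)) (q (K - j) - q (K - j - 1)) (parisiLevel K q m β j)

/-- The Parisi function `f(r, y; x, β)` for a piecewise constant order parameter `x`
given by nodes `q` and values `m`:  for `q_{a-1} ≤ r ≤ q_a` it is obtained from
`f(q_a, ·)` by one backward step with value `m_a` over a time `q_a - r`. -/
def parisiF (K : ℕ) (q m : ℕ → ℝ) (β : ℝ) (r y : ℝ) : ℝ :=
  pStep (m (sInf {a : ℕ | r ≤ q a})) (q (sInf {a : ℕ | r ≤ q a}) - r)
    (parisiLevel K q m β (K - sInf {a : ℕ | r ≤ q a})) y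

/-- The functional order parameter as a function: `x(r) = m_a` for `q_{a-1} ≤ r < q_a`,
and `x(1) = m_K`. -/
def xFun (K : ℕ) (q m : ℕ → ℝ) (r : ℝ) : ℝ :=
  if 1 ≤ r then m K else m (sInf {a : ℕ | r < q a})

/-- A piecewise constant functional order parameter:
`0 = q_0 ≤ q_1 ≤ … ≤ q_K = 1`, `0 ≤ m_1 ≤ … ≤ m_K ≤ 1`,
with the conventions `m_0 = 0`, `m_{K+1} = 1`. -/
structure OrderParam where
  K : ℕ
  hK : 1 ≤ K
  q : ℕ → ℝ
  m : ℕ → ℝ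
  hq0 : q 0 = 0
  hqK : q K = 1
  hq_mono : ∀ a, a < K → q a ≤ q (a + 1)
  hm0 : m 0 = 0
  hmtop : m (K + 1) = 1
  hm1 : 0 ≤ m 1
  hm_mono : ∀ a, 1 ≤ a → a < K → m a ≤ m (a + 1)
  hmK : m K ≤ 1

/-- Guerra's trial function `ᾱ(β, h; x) = log 2 + f(0, h; x, β) - (β²/2) ∫₀¹ r x(r) dr`. -/
def trialAlpha (K : ℕ) (q m : ℕ → ℝ) (β h : ℝ) : ℝ :=
  Real.log 2 + parisiLevel K q m β K h - β ^ 2 / 2 * ∫ r in (0 : ℝ)..1, r * xFun K q m r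

/-! ## The Sherrington–Kirkpatrick model -/

/-- The SK Hamiltonian `H_N(σ, h, J) = -(1/√N) ∑_{i<j} J_{ij} σ_i σ_j - h ∑_i σ_i`. -/
def hamSK (N : ℕ) (h : ℝ) (Jc : Fin N → Fin N → ℝ) (σ : Fin N → Bool) : ℝ :=
  -(1 / Real.sqrt N) * ∑ i, ∑ j, (if i < j then Jc i j * spin (σ i) * spin (σ j) else 0)
    - h * ∑ i, spin (σ i)

/-- The SK partition function `Z_N(β, h, J)`. -/
def ZSK (N : ℕ) (β h : ℝ) (Jc : Fin N → Fin N → ℝ) : ℝ :=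
  ∑ σ : Fin N → Bool, Real.exp (-(β * hamSK N h Jc σ))

/-- The quenched average `N⁻¹ E log Z_N(β, h, J)`. -/
def quenchedFE (N : ℕ) (β h : ℝ) : ℝ :=
  (N : ℝ)⁻¹ * ∫ Jc, Real.log (ZSK N β h Jc) ∂gaussC N

/-- The ground state energy density `e_N(J, h)`, defined by
`-e_N(J, h) = N⁻¹ min_σ H_N(σ, h, J)`. -/
def eGS (N : ℕ) (h : ℝ) (Jc : Fin N → Fin N → ℝ) : ℝ :=
  -((N : ℝ)⁻¹ * ⨅ σ : Fin N → Bool, hamSK N h Jc σ)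

/-- The quenched ground state energy density `e_N(h) = E(e_N(J, h))`. -/
def eQuenched (N : ℕ) (h : ℝ) : ℝ := ∫ Jc, eGS N h Jc ∂gaussC N

/-! ## The interpolating system -/

/-- The interpolating Boltzmann factor. -/
def bFac (N K : ℕ) (β h t : ℝ) (q : ℕ → ℝ) (Jc : Fin N → Fin N → ℝ)
    (Js : Fin K → Fin N → ℝ) (σ : Fin N → Bool) : ℝ :=
  Real.exp (β * Real.sqrt (t / N) *
        ∑ i, ∑ j, (if i < j then Jc i j * spin (σ i) * spin (σ j) else 0)
      + β * h * ∑ i, spin (σ i)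
      + β * Real.sqrt (1 - t) *
          ∑ a : Fin K, Real.sqrt (q (a.val + 1) - q a.val) * ∑ i, Js a i * spin (σ i))

/-- The interpolating partition function `Z̃_N(β, h; t; x; J)`. -/
def Ztil (N K : ℕ) (β h t : ℝ) (q : ℕ → ℝ) (Jc : Fin N → Fin N → ℝ)
    (Js : Fin K → Fin N → ℝ) : ℝ :=
  ∑ σ : Fin N → Bool, bFac N K β h t q Jc Js σ

/-- `Wrec … j` is the random variable `Z_{K-j}`:  `Z_K = Z̃_N` and
`Z_{a-1} = (E_a (Z_a^{m_a}))^{1/m_a}`, where `E_a` integrates the Gaussian row `J^a`. -/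
def Wrec (N K : ℕ) (β h t : ℝ) (q m : ℕ → ℝ) :
    ℕ → (Fin N → Fin N → ℝ) → (Fin K → Fin N → ℝ) → ℝ
  | 0 => Ztil N K β h t q
  | j + 1 => fun Jc Js =>
      if hj : j < K then
        (∫ g : Fin N → ℝ,
            (Wrec N K β h t q m j Jc (Function.update Js ⟨K - 1 - j, by omega⟩ g)) ^ m (K - j)
          ∂gaussN N) ^ (m (K - j))⁻¹
      else Wrec N K β h t q m j Jc Js

/-- `Zrec … a` is the random variable `Z_a` of the broken replica interpolation. -/
def Zrec (N K : ℕ) (β h t : ℝ) (q m : ℕ → ℝ) (a : ℕ) :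
    (Fin N → Fin N → ℝ) → (Fin K → Fin N → ℝ) → ℝ :=
  Wrec N K β h t q m (K - a)

/-- The interpolating auxiliary function `α̃_N(t) = N⁻¹ E₀ log Z₀`. -/
def atilde (N K : ℕ) (β h : ℝ) (q m : ℕ → ℝ) (t : ℝ) : ℝ :=
  (N : ℝ)⁻¹ * ∫ Jc, Real.log (Wrec N K β h t q m K Jc 0) ∂gaussC N

/-- The normalized weight `f_a = Z_a^{m_a} / E_a(Z_a^{m_a}) = Z_a^{m_a} / Z_{a-1}^{m_a}`. -/
def fWeight (N K : ℕ) (β h t : ℝ) (q m : ℕ → ℝ) (a : ℕ) (Jc : Fin N → Fin N → ℝ)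
    (Js : Fin K → Fin N → ℝ) : ℝ :=
  Zrec N K β h t q m a Jc Js ^ m a / Zrec N K β h t q m (a - 1) Jc Js ^ m a

/-- The Gibbs expectation `ω(A)` of the interpolating Boltzmann factor. -/
def gibbs (N K : ℕ) (β h t : ℝ) (q : ℕ → ℝ) (A : (Fin N → Bool) → ℝ)
    (Jc : Fin N → Fin N → ℝ) (Js : Fin K → Fin N → ℝ) : ℝ :=
  (∑ σ : Fin N → Bool, A σ * bFac N K β h t q Jc Js σ) / Ztil N K β h t q Jc Js

/-- The two-replica Gibbs product expectation `Ω(A)`. -/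
def gibbs2 (N K : ℕ) (β h t : ℝ) (q : ℕ → ℝ) (A : (Fin N → Bool) → (Fin N → Bool) → ℝ)
    (Jc : Fin N → Fin N → ℝ) (Js : Fin K → Fin N → ℝ) : ℝ :=
  (∑ σ : Fin N → Bool, ∑ τ : Fin N → Bool,
      A σ τ * bFac N K β h t q Jc Js σ * bFac N K β h t q Jc Js τ) /
    Ztil N K β h t q Jc Js ^ 2

/-- `omT1 … A j` is the partially averaged state `ω̃_{K-j}(A)`:
`ω̃_K = ω` and `ω̃_{a-1}(·) = E_a (f_a ω̃_a(·))`. -/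
def omT1 (N K : ℕ) (β h t : ℝ) (q m : ℕ → ℝ) (A : (Fin N → Bool) → ℝ) :
    ℕ → (Fin N → Fin N → ℝ) → (Fin K → Fin N → ℝ) → ℝ
  | 0 => gibbs N K β h t q A
  | j + 1 => fun Jc Js =>
      if hj : j < K then
        ∫ g : Fin N → ℝ,
          fWeight N K β h t q m (K - j) Jc (Function.update Js ⟨K - 1 - j, by omega⟩ g) *
            omT1 N K β h t q m A j Jc (Function.update Js ⟨K - 1 - j, by omega⟩ g)
          ∂gaussN N
      else omT1 N K β h t q m A j Jc Js

/-- `omT2 … A j` is the partially averaged two-replica state `Ω̃_{K-j}(A)`: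
`Ω̃_K = Ω` and `Ω̃_{a-1}(·) = E_a (f_a Ω̃_a(·))`. -/
def omT2 (N K : ℕ) (β h t : ℝ) (q m : ℕ → ℝ) (A : (Fin N → Bool) → (Fin N → Bool) → ℝ) :
    ℕ → (Fin N → Fin N → ℝ) → (Fin K → Fin N → ℝ) → ℝ
  | 0 => gibbs2 N K β h t q A
  | j + 1 => fun Jc Js =>
      if hj : j < K then
        ∫ g : Fin N → ℝ,
          fWeight N K β h t q m (K - j) Jc (Function.update Js ⟨K - 1 - j, by omega⟩ g) *
            omT2 N K β h t q m A j Jc (Function.update Js ⟨K - 1 - j, by omega⟩ g)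
          ∂gaussN N
      else omT2 N K β h t q m A j Jc Js

/-- The deformed quenched average `⟨A⟩_a = E(f_1 ⋯ f_a Ω̃_a(A))` at interpolation
parameter `t`, for a function `A` of two replicas. -/
def angA (N K : ℕ) (β h t : ℝ) (q m : ℕ → ℝ) (a : ℕ)
    (A : (Fin N → Bool) → (Fin N → Bool) → ℝ) : ℝ :=
  ∫ Jc, ∫ Js,
      (∏ b ∈ Finset.Icc 1 a, fWeight N K β h t q m b Jc Js) *
        omT2 N K β h t q m A (K - a) Jc Js
    ∂gaussS K N ∂gaussC N

/-! ## Zero temperature (ground state) objects -/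

/-- The zero-temperature Parisi recursion: `parisiLevelBar K q m j` is `f̄(q_{K-j}, ·; x̄)`,
with final condition `f̄(q_K, y) = |y|`. -/
def parisiLevelBar (K : ℕ) (q m : ℕ → ℝ) : ℕ → ℝ → ℝ
  | 0 => fun y => |y|
  | j + 1 => pStep (m (K - j)) (q (K - j) - q (K - j - 1)) (parisiLevelBar K q m j)

/-- A zero-temperature piecewise constant order parameter: nodes
`0 = q_0 ≤ … ≤ q_K = 1` and nondecreasing values `0 ≤ m̄_1 ≤ … ≤ m̄_K`
(no upper bound `1`), with the convention `m̄_0 = 0`. -/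
structure ZeroTParam where
  K : ℕ
  hK : 1 ≤ K
  q : ℕ → ℝ
  m : ℕ → ℝ
  hq0 : q 0 = 0
  hqK : q K = 1
  hq_mono : ∀ a, a < K → q a ≤ q (a + 1)
  hm0 : m 0 = 0
  hm1 : 0 ≤ m 1
  hm_mono : ∀ a, 1 ≤ a → a < K → m a ≤ m (a + 1)

/-- The zero-temperature trial function `α̃(h; x̄) = f̄(0, h; x̄) - (1/2) ∫₀¹ r x̄(r) dr`. -/
def gsTrial (K : ℕ) (q m : ℕ → ℝ) (h : ℝ) : ℝ :=
  parisiLevelBar K q m K h - 1 / 2 * ∫ r in (0 : ℝ)..1, r * xFun K q m r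

/-! ## The p-spin model -/

/-- A piecewise constant functional order parameter on `[0, p/2]`:
`0 = q_0 ≤ … ≤ q_K = p/2` and `0 ≤ m_1 ≤ … ≤ m_K ≤ 1`. -/
structure POrderParam (p : ℕ) where
  K : ℕ
  hK : 1 ≤ K
  q : ℕ → ℝ
  m : ℕ → ℝ
  hq0 : q 0 = 0
  hqK : q K = p / 2
  hq_mono : ∀ a, a < K → q a ≤ q (a + 1)
  hm1 : 0 ≤ m 1
  hm_mono : ∀ a, 1 ≤ a → a < K → m a ≤ m (a + 1)
  hmK : m K ≤ 1

/-- The p-spin Hamiltonian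
`H_N(σ,h,J) = -(p!/(2N^{p-1}))^{1/2} ∑_{i_1<…<i_p} J_{i_1…i_p} σ_{i_1}⋯σ_{i_p} - h ∑_i σ_i`. -/
def hamP (p N : ℕ) (h : ℝ) (J : Finset (Fin N) → ℝ) (σ : Fin N → Bool) : ℝ :=
  -Real.sqrt ((Nat.factorial p : ℝ) / (2 * (N : ℝ) ^ (p - 1))) *
      ∑ S ∈ Finset.powersetCard p (Finset.univ : Finset (Fin N)), J S * ∏ i ∈ S, spin (σ i)
    - h * ∑ i, spin (σ i)

/-- The p-spin partition function. -/
def ZP (p N : ℕ) (β h : ℝ) (J : Finset (Fin N) → ℝ) : ℝ :=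
  ∑ σ : Fin N → Bool, Real.exp (-(β * hamP p N h J σ))

/-- The p-spin quenched average `N⁻¹ E log Z_N^{(p)}(β, h, J)`. -/
def quenchedFEP (p N : ℕ) (β h : ℝ) : ℝ :=
  (N : ℝ)⁻¹ * ∫ J, Real.log (ZP p N β h J) ∂gaussP N

/-- The functional order parameter on `[0, p/2]` as a function. -/
def xFunP (p K : ℕ) (q m : ℕ → ℝ) (r : ℝ) : ℝ :=
  if (p : ℝ) / 2 ≤ r then m K else m (sInf {a : ℕ | r < q a})

/-- The change of variables `q̄(r)` defined by `2r = p q̄^{p-1}`. -/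
def qBar (p : ℕ) (r : ℝ) : ℝ := (2 * r / p) ^ (((p : ℝ) - 1)⁻¹)

/-- The p-spin trial function
`ᾱ_p(β, h; x) = log 2 + f(0, h; x, β) - (β²/2) ∫₀^{p/2} q̄(r) x(r) dr`. -/
def trialAlphaP (p K : ℕ) (q m : ℕ → ℝ) (β h : ℝ) : ℝ :=
  Real.log 2 + parisiLevel K q m β K h
    - β ^ 2 / 2 * ∫ r in (0 : ℝ)..((p : ℝ) / 2), qBar p r * xFunP p K q m r

/-!
The weights are `f_b = Z_b ^ m_b / Z_{b-1} ^ m_b = exp (m_b (log Z_b - log Z_{b-1}))`,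
so everything reduces to the derivatives of the free energies `log Z_a`. Each `log Z_{a-1}` is the
exponential mean of `log Z_a` over the fields of level `a`, and the derivative of an exponential
mean is the average of the derivative under the exponentially tilted measure.
Tilting by `m_a log Z_a` is weighting by `f_a`, hence the derivative of `log Z_a` obeys the
recursion defining `ω̃_a`, while at the top level it is the Gibbs average of the derivative of the
energy. As the level-`a` fields are integrated out of `Z_c` for `c < a`, the corresponding
derivatives vanish. Exponential means preserve Lipschitz bounds, so every `log Z_a` is Lipschitz
in the fields; with the exponential moments of the Gaussian this justifies all differentiations
under the integral sign.
-/

section LogMeanExp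

open Real
open scoped NNReal Topology

variable {Ω α : Type*} [MeasurableSpace Ω] {μ : Measure Ω} {m : ℝ} {C : ℝ≥0}

/-- The exponential (Kolmogorov) mean `m⁻¹ log 𝔼[exp (m X)]`: the free energy obtained by averaging
out the randomness of `X` at replica parameter `m`. The value at `m = 0` is the junk value `0`. -/
def logMeanExp (μ : Measure Ω) (m : ℝ) (X : Ω → ℝ) : ℝ :=
  m⁻¹ * cgf X μ m

lemma abs_cgf_sub_cgf_le [NeZero μ] {X Y : Ω → ℝ} {δ : ℝ}
    (hX : Integrable (fun ω => exp (m * X ω)) μ) (hY : Integrable (fun ω => exp (m * Y ω)) μ)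
    (hXY : ∀ ω, |X ω - Y ω| ≤ δ) : |cgf X μ m - cgf Y μ m| ≤ |m| * δ := by
  have cgf_le_add : ∀ {X Y : Ω → ℝ}, Integrable (fun ω => exp (m * X ω)) μ →
      Integrable (fun ω => exp (m * Y ω)) μ → (∀ ω, |X ω - Y ω| ≤ δ) →
      cgf X μ m ≤ |m| * δ + cgf Y μ m := by
    intro X Y hX hY hXY
    rw [← exp_le_exp, exp_add, exp_cgf hX, exp_cgf hY, mgf, mgf, ← integral_const_mul]
    refine integral_mono hX (hY.const_mul _) fun ω => ?_
    dsimp only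
    rw [← exp_add, exp_le_exp, ← sub_le_iff_le_add, ← mul_sub]
    calc m * (X ω - Y ω) ≤ |m| * |X ω - Y ω| := (le_abs_self _).trans_eq (abs_mul _ _)
      _ ≤ |m| * δ := by gcongr; exact hXY ω
  rw [abs_sub_le_iff, sub_le_iff_le_add, sub_le_iff_le_add]
  exact ⟨cgf_le_add hX hY hXY, cgf_le_add hY hX fun ω => abs_sub_comm (X ω) (Y ω) ▸ hXY ω⟩

lemma lipschitzWith_logMeanExp [NeZero μ] [PseudoMetricSpace α] {X : α → Ω → ℝ}
    (hint : ∀ x, Integrable (fun ω => exp (m * X x ω)) μ)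
    (hlip : ∀ ω, LipschitzWith C (X · ω)) :
    LipschitzWith C (fun x => logMeanExp μ m (X x)) := by
  refine LipschitzWith.of_dist_le_mul fun x y => ?_
  have hcgf := abs_cgf_sub_cgf_le (hint x) (hint y) fun ω => (hlip ω).dist_le_mul x y
  rw [Real.dist_eq, logMeanExp, logMeanExp, ← mul_sub, abs_mul, abs_inv]
  exact inv_mul_le_of_le_mul₀ (abs_nonneg m) (by positivity) hcgf

lemma aestronglyMeasurable_of_hasDerivAt {F : Type*} [NormedAddCommGroup F] [NormedSpace ℝ F]
    {X : ℝ → Ω → F} {D : Ω → F} {u₀ : ℝ}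
    (hmeas : ∀ u, AEStronglyMeasurable (X u) μ) (hderiv : ∀ ω, HasDerivAt (X · ω) (D ω) u₀) :
    AEStronglyMeasurable D μ :=
  aestronglyMeasurable_of_tendsto_ae (𝓝[≠] u₀)
    (fun u => ((hmeas u).sub (hmeas u₀)).const_smul (u - u₀)⁻¹)
    (ae_of_all _ fun ω => (hderiv ω).tendsto_slope)

lemma lipschitzOnWith_exp_Iic (M : ℝ) :
    LipschitzOnWith (Real.nnabs (exp M)) exp (Set.Iic M) := by
  refine (convex_Iic M).lipschitzOnWith_of_nnnorm_deriv_le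
    (fun _ _ => differentiableAt_exp) fun x hx => ?_
  rw [Real.deriv_exp, ← NNReal.coe_le_coe, coe_nnnorm, Real.norm_eq_abs, Real.coe_nnabs, abs_exp,
    abs_exp]
  exact exp_le_exp.2 hx

lemma hasDerivAt_mgf_of_lipschitzWith {X : ℝ → Ω → ℝ} {D : Ω → ℝ} {u₀ : ℝ}
    (hmeas : ∀ u, AEStronglyMeasurable (X u) μ)
    (hint : Integrable (fun ω => exp (m * X u₀ ω)) μ)
    (hlip : ∀ ω, LipschitzWith C (X · ω)) (hderiv : ∀ ω, HasDerivAt (X · ω) (D ω) u₀) :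
    HasDerivAt (fun u => mgf (X u) μ m) (∫ ω, exp (m * X u₀ ω) * (m * D ω) ∂μ) u₀ := by
  have hmeas_exp (u : ℝ) : AEStronglyMeasurable (fun ω => exp (m * X u ω)) μ :=
    continuous_exp.comp_aestronglyMeasurable ((hmeas u).const_mul m)
  have hderiv_exp (ω : Ω) :
      HasDerivAt (fun u => exp (m * X u ω)) (exp (m * X u₀ ω) * (m * D ω)) u₀ :=
    ((hderiv ω).const_mul m).exp
  have hlip_mul (ω : Ω) : LipschitzWith (Real.nnabs m * C) (fun u => m * X u ω) :=
    LipschitzWith.of_dist_le_mul fun u v => by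
      rw [Real.dist_eq, ← mul_sub, abs_mul, NNReal.coe_mul, Real.coe_nnabs, mul_assoc]
      exact mul_le_mul_of_nonneg_left ((hlip ω).dist_le_mul u v) (abs_nonneg m)
  have hmaps (ω : Ω) : Set.MapsTo (fun u => m * X u ω) (Metric.ball u₀ 1)
      (Set.Iic (m * X u₀ ω + |m| * C)) := fun u hu => by
    have hdist : m * X u ω - m * X u₀ ω ≤ |m| * C * dist u u₀ :=
      (le_abs_self _).trans ((hlip_mul ω).dist_le_mul u u₀)
    have hball : |m| * C * dist u u₀ ≤ |m| * C * 1 := by gcongr; exact hu.le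
    rw [Set.mem_Iic]
    linarith
  refine (hasDerivAt_integral_of_dominated_loc_of_lip
    (bound := fun ω => exp (m * X u₀ ω + |m| * C) * (|m| * C)) (Metric.ball_mem_nhds u₀ one_pos)
    (Eventually.of_forall hmeas_exp) hint (aestronglyMeasurable_of_hasDerivAt hmeas_exp hderiv_exp)
    (ae_of_all _ fun ω => ?_) ?_ (ae_of_all _ hderiv_exp)).2
  · convert (lipschitzOnWith_exp_Iic (m * X u₀ ω + |m| * C)).comp
      (hlip_mul ω).lipschitzOnWith (hmaps ω) using 1
    · ext; simp
    · rfl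
  · simp only [exp_add]
    exact (hint.mul_const _).mul_const _

lemma hasDerivAt_logMeanExp [NeZero μ] (hm : m ≠ 0) {X : ℝ → Ω → ℝ} {D : Ω → ℝ} {u₀ : ℝ}
    (hmeas : ∀ u, AEStronglyMeasurable (X u) μ)
    (hint : Integrable (fun ω => exp (m * X u₀ ω)) μ)
    (hlip : ∀ ω, LipschitzWith C (X · ω)) (hderiv : ∀ ω, HasDerivAt (X · ω) (D ω) u₀) :
    HasDerivAt (fun u => logMeanExp μ m (X u)) (∫ ω, D ω ∂μ.tilted (fun ω => m * X u₀ ω)) u₀ := by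
  have hmgf := hasDerivAt_mgf_of_lipschitzWith hmeas hint hlip hderiv
  refine ((hmgf.log (mgf_pos' (NeZero.ne μ) hint).ne').const_mul m⁻¹).congr_deriv ?_
  rw [integral_tilted, ← integral_div, ← integral_const_mul]
  congr with ω
  rw [smul_eq_mul, mgf]
  field_simp

end LogMeanExp

section RowLogMeanExp

open Function Real
open scoped NNReal

lemma lipschitzWith_update_left {ι : Type*} [Fintype ι] [DecidableEq ι] {F : ι → Type*}
    [∀ i, PseudoEMetricSpace (F i)] (k : ι) (g : F k) :
    LipschitzWith 1 (fun x : ∀ i, F i => update x k g) := by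
  intro x y
  rw [ENNReal.coe_one, one_mul, edist_pi_le_iff]
  intro i
  obtain rfl | hik := eq_or_ne i k
  · simp
  · simpa [hik] using edist_le_pi_edist x y i

lemma lipschitzWith_update_right {ι : Type*} [Fintype ι] [DecidableEq ι] {F : ι → Type*}
    [∀ i, PseudoEMetricSpace (F i)] (x : ∀ i, F i) (k : ι) :
    LipschitzWith 1 (update x k) := by
  intro g g'
  rw [ENNReal.coe_one, one_mul, edist_pi_le_iff]
  intro i
  obtain rfl | hik := eq_or_ne i k
  · simp
  · simp [hik]

lemma lipschitzWith_add_smul {F : Type*} [SeminormedAddCommGroup F] [NormedSpace ℝ F] (x v : F) :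
    LipschitzWith ‖v‖₊ (fun u : ℝ => x + u • v) :=
  LipschitzWith.of_dist_le_mul fun u w => by
    rw [dist_add_left, dist_eq_norm, ← sub_smul, norm_smul, mul_comm, coe_nnnorm, dist_eq_norm]

/-- The exponential mean of `G` over its `k`-th coordinate, the others being held fixed: on free
energies `log Z`, this is the map `Z ↦ (E_k Z ^ m) ^ (1 / m)`. -/
def rowLogMeanExp {ι E : Type*} [DecidableEq ι] [MeasurableSpace E] (μ : Measure E) (m : ℝ) (k : ι)
    (G : (ι → E) → ℝ) (x : ι → E) : ℝ :=
  logMeanExp μ m fun g => G (update x k g)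

variable {E : Type*} [SeminormedAddCommGroup E] [MeasurableSpace E] [OpensMeasurableSpace E]
  {μ : Measure E} {C : ℝ≥0}

lemma integrable_exp_mul_of_lipschitzWith
    (hμ : ∀ L : ℝ, Integrable (fun g => exp (L * ‖g‖)) μ) {Y : E → ℝ} (hY : LipschitzWith C Y)
    (m : ℝ) : Integrable (fun g => exp (m * Y g)) μ := by
  have hcont := hY.continuous
  refine ((hμ (|m| * C)).const_mul (exp (m * Y 0))).mono' (by fun_prop) (ae_of_all _ fun g => ?_)
  rw [norm_eq_abs, abs_exp, ← exp_add, exp_le_exp, ← sub_le_iff_le_add', ← mul_sub, mul_assoc]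
  calc m * (Y g - Y 0) ≤ |m| * |Y g - Y 0| := (le_abs_self _).trans_eq (abs_mul _ _)
    _ ≤ |m| * (C * ‖g‖) := by
      gcongr
      simpa [Real.dist_eq] using hY.dist_le_mul g 0

variable {ι : Type*} [Fintype ι] [DecidableEq ι] [NeZero μ] {m : ℝ} {k : ι} {G : (ι → E) → ℝ}

lemma mgf_update_pos (hμ : ∀ L : ℝ, Integrable (fun g => exp (L * ‖g‖)) μ)
    (hG : LipschitzWith C G) (x : ι → E) : 0 < mgf (fun g => G (update x k g)) μ m :=
  mgf_pos' (NeZero.ne μ)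
    (integrable_exp_mul_of_lipschitzWith hμ (hG.comp (lipschitzWith_update_right x k)) m)

lemma lipschitzWith_rowLogMeanExp (hμ : ∀ L : ℝ, Integrable (fun g => exp (L * ‖g‖)) μ)
    (hG : LipschitzWith C G) : LipschitzWith C (rowLogMeanExp μ m k G) :=
  lipschitzWith_logMeanExp
    (fun x => integrable_exp_mul_of_lipschitzWith hμ (hG.comp (lipschitzWith_update_right x k)) m)
    (fun g => mul_one C ▸ hG.comp (lipschitzWith_update_left (F := fun _ => E) k g))

lemma hasLineDerivAt_rowLogMeanExp [NormedSpace ℝ E] (hm : m ≠ 0)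
    (hμ : ∀ L : ℝ, Integrable (fun g => exp (L * ‖g‖)) μ) (hG : LipschitzWith C G)
    {D : (ι → E) → ℝ} {v : ι → E} (hv : v k = 0) (hD : ∀ y, HasLineDerivAt ℝ G (D y) y v)
    (x : ι → E) :
    HasLineDerivAt ℝ (rowLogMeanExp μ m k G)
      (∫ g, D (update x k g) ∂μ.tilted (fun g => m * G (update x k g))) x v := by
  have hfix (u : ℝ) : update (u • v) k 0 = u • v := by simp [hv]
  have hshift (u : ℝ) (g : E) : update (x + u • v) k g = update x k g + u • v := by
    simpa only [add_zero, hfix] using update_add x (u • v) k g 0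
  have hrow (u : ℝ) : LipschitzWith (C * 1) (fun g => G (update (x + u • v) k g)) :=
    hG.comp (lipschitzWith_update_right (x + u • v) k)
  have hline (g : E) : LipschitzWith (C * ‖v‖₊) (fun u : ℝ => G (update (x + u • v) k g)) := by
    simp only [hshift]
    exact hG.comp (lipschitzWith_add_smul (update x k g) v)
  have hderiv (g : E) :
      HasDerivAt (fun u : ℝ => G (update (x + u • v) k g)) (D (update x k g)) 0 := by
    simp only [hshift]
    exact hD (update x k g)
  have hmean := hasDerivAt_logMeanExp hm (fun u => (hrow u).continuous.aestronglyMeasurable)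
    (integrable_exp_mul_of_lipschitzWith hμ (hrow 0) m) hline hderiv
  simp only [zero_smul, add_zero] at hmean
  exact hmean

end RowLogMeanExp

section Interpolation

open Function Real
open scoped NNReal

lemma integrable_exp_mul_norm_gaussN (N : ℕ) (L : ℝ) :
    Integrable (fun g : Fin N → ℝ => exp (L * ‖g‖)) (gaussN N) := by
  have hcoord : Integrable (fun y : ℝ => exp (|L| * |y|)) stdGauss :=
    integrable_exp_mul_abs (X := id) (integrable_exp_mul_gaussianReal |L|)
      (integrable_exp_mul_gaussianReal (-|L|))
  have hprod : Integrable (fun g : Fin N → ℝ => ∏ i, exp (|L| * |g i|)) (gaussN N) :=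
    Integrable.fintype_prod fun _ => hcoord
  refine hprod.mono' (by fun_prop) (ae_of_all _ fun g => ?_)
  have hnorm : ‖g‖ ≤ ∑ i, |g i| :=
    (pi_norm_le_iff_of_nonneg (Finset.sum_nonneg fun i _ => abs_nonneg (g i))).2 fun i =>
      Finset.single_le_sum (f := fun i => |g i|) (fun i _ => abs_nonneg _) (Finset.mem_univ i)
  rw [norm_eq_abs, abs_exp, ← exp_sum, exp_le_exp, ← Finset.mul_sum]
  calc L * ‖g‖ ≤ |L| * ‖g‖ := by gcongr; exact le_abs_self L
    _ ≤ |L| * ∑ i, |g i| := by gcongr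

/-- The part `β √(1 - t) ∑ₐ √(qₐ - qₐ₋₁) ∑ᵢ Jᵢᵃ σᵢ` of the exponent of the Boltzmann factor, as a
linear form in the one-body fields `J`. -/
def fieldEnergy {N K : ℕ} (β t : ℝ) (q : ℕ → ℝ) (σ : Fin N → Bool) :
    (Fin K → Fin N → ℝ) →L[ℝ] ℝ :=
  (β * √(1 - t)) • ∑ a : Fin K, √(q (a.val + 1) - q a.val) •
    ∑ i, spin (σ i) • (ContinuousLinearMap.proj (R := ℝ) (φ := fun _ : Fin N => ℝ) i).comp
      (ContinuousLinearMap.proj (φ := fun _ : Fin K => Fin N → ℝ) a)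

variable {N K : ℕ} {β h t : ℝ} {q m : ℕ → ℝ} {Jc : Fin N → Fin N → ℝ}

lemma fieldEnergy_apply (σ : Fin N → Bool) (x : Fin K → Fin N → ℝ) :
    fieldEnergy β t q σ x =
      β * √(1 - t) * ∑ a : Fin K, √(q (a.val + 1) - q a.val) * ∑ i, x a i * spin (σ i) := by
  simp [fieldEnergy, mul_comm]

lemma fieldEnergy_single (σ : Fin N → Bool) (a : Fin K) (i : Fin N) :
    fieldEnergy β t q σ (Pi.single a (Pi.single i 1)) =
      β * √(1 - t) * √(q (a.val + 1) - q a.val) * spin (σ i) := by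
  rw [fieldEnergy_apply, Finset.sum_eq_single a (fun b _ hb => by simp [hb]) (by simp),
    Finset.sum_eq_single i (fun j _ hj => by simp [hj]) (by simp)]
  simp [mul_assoc]

lemma bFac_pos (x : Fin K → Fin N → ℝ) (σ : Fin N → Bool) : 0 < bFac N K β h t q Jc x σ :=
  exp_pos _

lemma log_bFac_add (x y : Fin K → Fin N → ℝ) (σ : Fin N → Bool) :
    log (bFac N K β h t q Jc (x + y) σ) =
      log (bFac N K β h t q Jc x σ) + fieldEnergy β t q σ y := by
  simp only [bFac, log_exp, ← fieldEnergy_apply, map_add]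
  ring

lemma lipschitzWith_log_bFac (σ : Fin N → Bool) :
    LipschitzWith (∑ τ : Fin N → Bool, ‖fieldEnergy (K := K) β t q τ‖₊)
      (fun x => log (bFac N K β h t q Jc x σ)) :=
  LipschitzWith.of_dist_le_mul fun x y => by
    have hlog := log_bFac_add (β := β) (h := h) (t := t) (q := q) (Jc := Jc) y (x - y) σ
    rw [add_sub_cancel] at hlog
    rw [hlog, dist_self_add_left, dist_eq_norm]
    refine (ContinuousLinearMap.le_opNorm _ _).trans ?_
    gcongr
    exact_mod_cast Finset.single_le_sum (f := fun τ => ‖fieldEnergy (K := K) β t q τ‖₊)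
      (fun _ _ => zero_le) (Finset.mem_univ σ)

lemma hasLineDerivAt_log_bFac (x v : Fin K → Fin N → ℝ) (σ : Fin N → Bool) :
    HasLineDerivAt ℝ (fun x => log (bFac N K β h t q Jc x σ)) (fieldEnergy β t q σ v) x v := by
  simp only [HasLineDerivAt, log_bFac_add, map_smul]
  simpa using ((hasDerivAt_id (0 : ℝ)).smul_const (fieldEnergy β t q σ v)).const_add
    (log (bFac N K β h t q Jc x σ))

lemma Ztil_pos (x : Fin K → Fin N → ℝ) : 0 < Ztil N K β h t q Jc x :=
  Finset.sum_pos (fun σ _ => bFac_pos x σ) Finset.univ_nonempty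

lemma log_Ztil (x : Fin K → Fin N → ℝ) :
    log (Ztil N K β h t q Jc x) =
      logMeanExp Measure.count 1 (fun σ => log (bFac N K β h t q Jc x σ)) := by
  simp [logMeanExp, cgf, mgf, exp_log (bFac_pos _ _), Ztil]

lemma gibbs_eq_integral_tilted (A : (Fin N → Bool) → ℝ) (x : Fin K → Fin N → ℝ) :
    gibbs N K β h t q A Jc x =
      ∫ σ, A σ ∂(Measure.count.tilted fun σ => 1 * log (bFac N K β h t q Jc x σ)) := by
  rw [integral_tilted]
  simp only [integral_count, one_mul, exp_log (bFac_pos _ _), gibbs, Ztil, Finset.sum_div]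
  exact Finset.sum_congr rfl fun σ _ => by rw [smul_eq_mul]; ring

lemma lipschitzWith_log_Ztil :
    LipschitzWith (∑ τ : Fin N → Bool, ‖fieldEnergy (K := K) β t q τ‖₊)
      (fun x => log (Ztil N K β h t q Jc x)) := by
  simp only [log_Ztil]
  exact lipschitzWith_logMeanExp (fun _ => .of_finite) lipschitzWith_log_bFac

lemma hasLineDerivAt_log_Ztil (x v : Fin K → Fin N → ℝ) :
    HasLineDerivAt ℝ (fun x => log (Ztil N K β h t q Jc x))
      (gibbs N K β h t q (fieldEnergy β t q · v) Jc x) x v := by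
  simp only [log_Ztil, gibbs_eq_integral_tilted]
  have hderiv := hasDerivAt_logMeanExp (μ := Measure.count) (u₀ := 0) one_ne_zero
    (fun _ => .of_discrete) .of_finite
    (fun σ => (lipschitzWith_log_bFac σ).comp (lipschitzWith_add_smul x v))
    (fun σ => hasLineDerivAt_log_bFac (β := β) (h := h) (t := t) (q := q) (Jc := Jc) x v σ)
  simp only [zero_smul, add_zero, Function.comp_apply] at hderiv
  exact hderiv

lemma Zrec_self : Zrec N K β h t q m K = Ztil N K β h t q := by
  rw [Zrec, Nat.sub_self, Wrec]

lemma Zrec_eq_integral_rpow (k : Fin K) (x : Fin K → Fin N → ℝ) :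
    Zrec N K β h t q m k Jc x =
      (∫ g, Zrec N K β h t q m (k + 1) Jc (update x k g) ^ m (k + 1) ∂gaussN N) ^
        (m (k + 1))⁻¹ := by
  have hsucc : K - k = K - (k + 1) + 1 := by omega
  have hlevel : K - (K - (k + 1)) = k + 1 := by omega
  have hrow : K - 1 - (K - (k + 1)) = k := by omega
  rw [Zrec, hsucc, Wrec]
  simp only [hlevel, hrow, Fin.eta, Zrec]
  exact dif_pos (by omega)

lemma Zrec_eq_mgf_rpow (k : Fin K) (hpos : ∀ y, 0 < Zrec N K β h t q m (k + 1) Jc y)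
    (x : Fin K → Fin N → ℝ) :
    Zrec N K β h t q m k Jc x =
      mgf (fun g => log (Zrec N K β h t q m (k + 1) Jc (update x k g))) (gaussN N) (m (k + 1)) ^
        (m (k + 1))⁻¹ := by
  simp only [Zrec_eq_integral_rpow, mgf, rpow_def_of_pos (hpos _), mul_comm (m _)]

-- The two are proved together: the Lipschitz bound makes `Z_a ^ m_a` integrable, so that `Z_{a-1}`
-- is not the junk value of a divergent integral.
lemma Zrec_pos_and_lipschitzWith_log_Zrec {a : ℕ} (ha : a ≤ K) :
    (∀ x, 0 < Zrec N K β h t q m a Jc x) ∧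
      LipschitzWith (∑ τ : Fin N → Bool, ‖fieldEnergy (K := K) β t q τ‖₊)
        (fun x => log (Zrec N K β h t q m a Jc x)) := by
  induction ha using Nat.decreasingInduction with
  | self => exact Zrec_self (K := K) ▸ ⟨Ztil_pos, lipschitzWith_log_Ztil⟩
  | of_succ a ha ih =>
    obtain ⟨hpos, hlip⟩ := ih
    have hmgf := mgf_update_pos (m := m (a + 1)) (k := ⟨a, ha⟩)
      (integrable_exp_mul_norm_gaussN N) hlip
    have hZ := Zrec_eq_mgf_rpow ⟨a, ha⟩ hpos
    have hrow := lipschitzWith_rowLogMeanExp (m := m (a + 1)) (k := ⟨a, ha⟩)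
      (integrable_exp_mul_norm_gaussN N) hlip
    refine ⟨fun x => hZ x ▸ rpow_pos_of_pos (hmgf x) _, ?_⟩
    convert hrow using 2 with x
    rw [hZ, log_rpow (hmgf x), rowLogMeanExp, logMeanExp, cgf]

lemma Zrec_pos {a : ℕ} (ha : a ≤ K) (x : Fin K → Fin N → ℝ) : 0 < Zrec N K β h t q m a Jc x :=
  (Zrec_pos_and_lipschitzWith_log_Zrec ha).1 x

lemma lipschitzWith_log_Zrec {a : ℕ} (ha : a ≤ K) :
    LipschitzWith (∑ τ : Fin N → Bool, ‖fieldEnergy (K := K) β t q τ‖₊)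
      (fun x => log (Zrec N K β h t q m a Jc x)) :=
  (Zrec_pos_and_lipschitzWith_log_Zrec ha).2

lemma mgf_log_Zrec_update_pos (k : Fin K) (x : Fin K → Fin N → ℝ) :
    0 < mgf (fun g => log (Zrec N K β h t q m (k + 1) Jc (update x k g))) (gaussN N)
      (m (k + 1)) :=
  mgf_update_pos (integrable_exp_mul_norm_gaussN N) (lipschitzWith_log_Zrec k.2) x

lemma log_Zrec_eq_rowLogMeanExp (k : Fin K) (x : Fin K → Fin N → ℝ) :
    log (Zrec N K β h t q m k Jc x) =
      rowLogMeanExp (gaussN N) (m (k + 1)) k (fun y => log (Zrec N K β h t q m (k + 1) Jc y))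
        x := by
  rw [Zrec_eq_mgf_rpow k (Zrec_pos k.2), log_rpow (mgf_log_Zrec_update_pos k x), rowLogMeanExp,
    logMeanExp, cgf]

lemma Zrec_update_of_le {a : ℕ} {k : Fin K} (hak : a ≤ k) (x : Fin K → Fin N → ℝ)
    (g : Fin N → ℝ) : Zrec N K β h t q m a Jc (update x k g) = Zrec N K β h t q m a Jc x := by
  induction hak using Nat.decreasingInduction generalizing x with
  | self => simp only [Zrec_eq_integral_rpow, update_idem]
  | of_succ a ha ih =>
    have hne : k ≠ ⟨a, ha.trans k.2⟩ := Fin.ne_of_gt ha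
    have hrec := Zrec_eq_integral_rpow (β := β) (h := h) (t := t) (q := q) (m := m) (Jc := Jc)
      (⟨a, ha.trans k.2⟩ : Fin K)
    rw [hrec, hrec]
    simp only [update_comm hne, ih]

lemma omT1_eq_integral_tilted (k : Fin K) (hm : m (k + 1) ≠ 0) (A : (Fin N → Bool) → ℝ)
    (x : Fin K → Fin N → ℝ) :
    omT1 N K β h t q m A (K - k) Jc x =
      ∫ g, omT1 N K β h t q m A (K - (k + 1)) Jc (update x k g)
        ∂(gaussN N).tilted
          (fun g => m (k + 1) * log (Zrec N K β h t q m (k + 1) Jc (update x k g))) := by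
  have hsucc : K - k = K - (k + 1) + 1 := by omega
  have hlevel : K - (K - (k + 1)) = k + 1 := by omega
  have hrow : K - 1 - (K - (k + 1)) = k := by omega
  have hnorm : Zrec N K β h t q m k Jc x ^ m (k + 1) =
      ∫ g, exp (m (k + 1) * log (Zrec N K β h t q m (k + 1) Jc (update x k g))) ∂gaussN N := by
    rw [Zrec_eq_mgf_rpow k (Zrec_pos k.2),
      rpow_inv_rpow (mgf_log_Zrec_update_pos k x).le hm, mgf]
  rw [hsucc, omT1]
  simp only [hlevel, hrow, Fin.eta, fWeight, Nat.add_sub_cancel, Zrec_update_of_le le_rfl, hnorm]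
  rw [dif_pos (by omega), integral_tilted]
  simp only [rpow_def_of_pos (Zrec_pos k.2 _), mul_comm (log _), smul_eq_mul]

lemma omT1_const_mul (c : ℝ) (A : (Fin N → Bool) → ℝ) (j : ℕ) (x : Fin K → Fin N → ℝ) :
    omT1 N K β h t q m (fun σ => c * A σ) j Jc x = c * omT1 N K β h t q m A j Jc x := by
  induction j generalizing x with
  | zero => simp only [omT1, gibbs, mul_assoc, ← Finset.mul_sum, mul_div_assoc]
  | succ j ih =>
    simp only [omT1, ih, mul_left_comm _ c, integral_const_mul]
    split_ifs <;> rfl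

lemma hasLineDerivAt_log_Zrec {a : ℕ} (ha : a ≤ K) (hm : ∀ c, a < c → c ≤ K → m c ≠ 0)
    {v : Fin K → Fin N → ℝ} (hv : ∀ k : Fin K, a ≤ k → v k = 0) (x : Fin K → Fin N → ℝ) :
    HasLineDerivAt ℝ (fun x => log (Zrec N K β h t q m a Jc x))
      (omT1 N K β h t q m (fieldEnergy β t q · v) (K - a) Jc x) x v := by
  induction ha using Nat.decreasingInduction generalizing x with
  | self =>
    rw [Nat.sub_self, omT1, Zrec_self]
    exact hasLineDerivAt_log_Ztil x v
  | of_succ a ha ih =>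
    have ihv := ih (fun c hc => hm c (Nat.lt_of_succ_lt hc)) fun k hk => hv k (Nat.le_of_succ_le hk)
    have hma : m (a + 1) ≠ 0 := hm (a + 1) a.lt_succ_self ha
    rw [omT1_eq_integral_tilted ⟨a, ha⟩ hma]
    simp only [log_Zrec_eq_rowLogMeanExp ⟨a, ha⟩]
    exact hasLineDerivAt_rowLogMeanExp hma (integrable_exp_mul_norm_gaussN N)
      (lipschitzWith_log_Zrec ha) (hv ⟨a, ha⟩ le_rfl) ihv x

lemma hasDerivAt_log_Zrec_update {a : ℕ} (ha : a ≤ K) (hm : ∀ c, a < c → c ≤ K → m c ≠ 0)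
    {k : Fin K} (hk : k < a) (i : Fin N) (x : Fin K → Fin N → ℝ) :
    HasDerivAt (fun u => log (Zrec N K β h t q m a Jc (update x k (update (x k) i u))))
      (β * √(1 - t) * √(q (k + 1) - q k) *
        omT1 N K β h t q m (fun σ => spin (σ i)) (K - a) Jc x) (x k i) := by
  have hv (l : Fin K) (hl : a ≤ l) : (Pi.single k (Pi.single i 1) : Fin K → Fin N → ℝ) l = 0 :=
    Pi.single_eq_of_ne (Fin.ne_of_gt (hk.trans_le hl)) _
  have hpath (u : ℝ) : update x k (update (x k) i u) =
      x + (u - x k i) • (Pi.single k (Pi.single i 1) : Fin K → Fin N → ℝ) := by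
    ext l j
    obtain rfl | hl := eq_or_ne l k
    · obtain rfl | hj := eq_or_ne j i <;> simp [*]
    · simp [hl]
  have hline := hasLineDerivAt_log_Zrec (β := β) (h := h) (t := t) (q := q) (Jc := Jc) ha hm hv x
  simp only [fieldEnergy_single, omT1_const_mul] at hline
  simp only [hpath]
  rw [HasLineDerivAt, ← sub_self (x k i)] at hline
  exact hline.comp_sub_const (x k i) (x k i)

lemma hasDerivAt_log_Zrec_update_of_le {a : ℕ} {k : Fin K} (hak : a ≤ k) (i : Fin N)
    (x : Fin K → Fin N → ℝ) :
    HasDerivAt (fun u => log (Zrec N K β h t q m a Jc (update x k (update (x k) i u)))) 0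
      (x k i) := by
  simp only [Zrec_update_of_le hak]
  exact hasDerivAt_const _ _

lemma fWeight_eq_exp {b : ℕ} (hb : b ≤ K) (x : Fin K → Fin N → ℝ) :
    fWeight N K β h t q m b Jc x =
      exp (m b * (log (Zrec N K β h t q m b Jc x) - log (Zrec N K β h t q m (b - 1) Jc x))) := by
  rw [fWeight, rpow_def_of_pos (Zrec_pos hb x),
    rpow_def_of_pos (Zrec_pos ((b.sub_le 1).trans hb) x), ← exp_sub, ← sub_mul, mul_comm]

lemma hasDerivAt_fWeight_comp {b : ℕ} (hb : b ≤ K) {γ : ℝ → Fin K → Fin N → ℝ} {u₀ D D' : ℝ}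
    (hD : HasDerivAt (fun u => log (Zrec N K β h t q m b Jc (γ u))) D u₀)
    (hD' : HasDerivAt (fun u => log (Zrec N K β h t q m (b - 1) Jc (γ u))) D' u₀) :
    HasDerivAt (fun u => fWeight N K β h t q m b Jc (γ u))
      (m b * fWeight N K β h t q m b Jc (γ u₀) * (D - D')) u₀ := by
  simp only [fWeight_eq_exp hb]
  exact ((hD.sub hD').const_mul (m b)).exp.congr_deriv (by simp only [Pi.sub_apply]; ring)

end Interpolation

theorem fWeight_field_derivs_general (N K : ℕ) (q m : ℕ → ℝ) (β h t : ℝ)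
    (ht : t ∈ Set.Icc (0 : ℝ) 1) (hq : ∀ a, a < K → q a ≤ q (a + 1)) (A : Fin K) (i : Fin N)
    (b : ℕ) (hb1 : 1 ≤ b) (hbK : b ≤ K) (hm : ∀ c, b ≤ c → c ≤ K → m c ≠ 0)
    (Jc : Fin N → Fin N → ℝ) (Js : Fin K → Fin N → ℝ) :
    (b < A.val + 1 →
      HasDerivAt
        (fun u => fWeight N K β h t q m b
          Jc (Function.update Js A (Function.update (Js A) i u)))
        0 (Js A i))
    ∧ (b = A.val + 1 →
      HasDerivAt
        (fun u => fWeight N K β h t q m b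
          Jc (Function.update Js A (Function.update (Js A) i u)))
        (β * Real.sqrt (1 - t) * Real.sqrt (q (A.val + 1) - q A.val) * m b *
          fWeight N K β h t q m b Jc Js *
          omT1 N K β h t q m (fun σ => spin (σ i)) (K - b) Jc Js)
        (Js A i))
    ∧ (A.val + 1 < b →
      HasDerivAt
        (fun u => fWeight N K β h t q m b
          Jc (Function.update Js A (Function.update (Js A) i u)))
        (β * Real.sqrt (1 - t) * Real.sqrt (q (A.val + 1) - q A.val) * m b *
          fWeight N K β h t q m b Jc Js *
          (omT1 N K β h t q m (fun σ => spin (σ i)) (K - b) Jc Js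
            - omT1 N K β h t q m (fun σ => spin (σ i)) (K - (b - 1)) Jc Js))
        (Js A i)) := by
  have hJs : Function.update Js A (Function.update (Js A) i (Js A i)) = Js := by
    simp only [Function.update_eq_self]
  have hlogZ_of_le {c : ℕ} (hcA : c ≤ A.val) :=
    hasDerivAt_log_Zrec_update_of_le (β := β) (h := h) (t := t) (q := q) (m := m) (Jc := Jc) hcA i
      Js
  have hlogZ {c : ℕ} (hbc : b ≤ c + 1) (hcK : c ≤ K) (hAc : A.val < c) :=
    hasDerivAt_log_Zrec_update (β := β) (h := h) (t := t) (q := q) (Jc := Jc) hcK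
      (fun d hcd => hm d (hbc.trans hcd)) hAc i Js
  refine ⟨fun hbA => ?_, fun hbA => ?_, fun hAb => ?_⟩
  · exact (hasDerivAt_fWeight_comp hbK (hlogZ_of_le (by omega))
      (hlogZ_of_le (by omega))).congr_deriv (by ring)
  · exact (hasDerivAt_fWeight_comp hbK (hlogZ (by omega) hbK (by omega))
      (hlogZ_of_le (by omega))).congr_deriv (by rw [hJs]; ring)
  · exact (hasDerivAt_fWeight_comp hbK (hlogZ (by omega) hbK (by omega))
      (hlogZ (by omega) (by omega) (by omega))).congr_deriv (by rw [hJs]; ring)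

/-- derivatives of the normalized weights `f_b` with respect to the
one-body Gaussian field `J_i^a` (the row `A : Fin K` represents the paper level
`a = A.val + 1`), for each fixed realization of the disorder:
`∂_{J_i^a} f_b = 0` if `b < a`;
`∂_{J_i^a} f_a = β √(1−t) √(q_a − q_{a−1}) m_a f_a ω̃_a(σ_i)`;
`∂_{J_i^a} f_b = β √(1−t) √(q_a − q_{a−1}) m_b f_b (ω̃_b(σ_i) − ω̃_{b−1}(σ_i))` if `b > a`,
where `ω̃_c = omT1 … (K − c)`. -/
theorem fWeight_field_derivs (N : ℕ) (hN : 1 ≤ N) (X : OrderParam)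
    (hm : ∀ b, 1 ≤ b → b ≤ X.K → 0 < X.m b) (β h t : ℝ) (hβ : 0 ≤ β)
    (ht : t ∈ Set.Ioo (0 : ℝ) 1) (A : Fin X.K) (i : Fin N)
    (b : ℕ) (hb1 : 1 ≤ b) (hbK : b ≤ X.K)
    (Jc : Fin N → Fin N → ℝ) (Js : Fin X.K → Fin N → ℝ) :
    (b < A.val + 1 →
      HasDerivAt
        (fun u => fWeight N X.K β h t X.q X.m b
          Jc (Function.update Js A (Function.update (Js A) i u)))
        0 (Js A i))
    ∧ (b = A.val + 1 →
      HasDerivAt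
        (fun u => fWeight N X.K β h t X.q X.m b
          Jc (Function.update Js A (Function.update (Js A) i u)))
        (β * Real.sqrt (1 - t) * Real.sqrt (X.q (A.val + 1) - X.q A.val) * X.m b *
          fWeight N X.K β h t X.q X.m b Jc Js *
          omT1 N X.K β h t X.q X.m (fun σ => spin (σ i)) (X.K - b) Jc Js)
        (Js A i))
    ∧ (A.val + 1 < b →
      HasDerivAt
        (fun u => fWeight N X.K β h t X.q X.m b
          Jc (Function.update Js A (Function.update (Js A) i u)))
        (β * Real.sqrt (1 - t) * Real.sqrt (X.q (A.val + 1) - X.q A.val) * X.m b *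
          fWeight N X.K β h t X.q X.m b Jc Js *
          (omT1 N X.K β h t X.q X.m (fun σ => spin (σ i)) (X.K - b) Jc Js
            - omT1 N X.K β h t X.q X.m (fun σ => spin (σ i)) (X.K - (b - 1)) Jc Js))
        (Js A i)) := by
  exact fWeight_field_derivs_general N X.K X.q X.m β h t ⟨ht.1.le, ht.2.le⟩ X.hq_mono A i b hb1 hbK
    (fun c hbc hcK => (hm c (hb1.trans hbc) hcK).ne') Jc Js

end
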